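/- Let 0<q<1 and σ>0, and take γ=0 (so condition (R) holds). Then the radii of convexity of g_{0,σ}(·;q) and h_{0,σ}(·;q) satisfy (1+q)/(9σ²) < (r^c(g_{0,σ}(·;q)))² < 9(1+q)(1+q²)(1+q+q²) / ( σ²(81q⁴+81q³+112q²+81q+81) ) and (1+q)/(4σ²) < r^c(h_{0,σ}(·;q)) < 2(1+q)(1+q²)(1+q+q²) / ( σ²(8q⁴+8q³+7q²+8q+8) ). -/

import Mathlib

noncomputable def qPochInf (a q : ℝ) : ℝ := ∏' k : ℕ, (1 - a * q ^ k)

noncomputable def qGamma (q x : ℝ) : ℝ :=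
  qPochInf q q * (1 - q) ^ (1 - x) / qPochInf (q ^ x) q

noncomputable def qML (γ σ q : ℝ) (z : ℂ) : ℂ :=
  ∑' n : ℕ,
    (((-1) ^ n * σ ^ (2 * n) * q ^ (n * (n - 1)) / qGamma q (2 * n + γ + 1) : ℝ) : ℂ) * z ^ (2 * n)

noncomputable def qMLR (γ σ q : ℝ) (x : ℝ) : ℝ :=
  ∑' n : ℕ,
    ((-1) ^ n * σ ^ (2 * n) * q ^ (n * (n - 1)) / qGamma q (2 * n + γ + 1)) * x ^ (2 * n)

def condR (q γ : ℝ) : Prop :=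
  (γ = 0 ∨ γ = 1) ∨
    (γ ∈ Set.Ioo (0 : ℝ) 2 ∧ γ ≠ 1 ∧
      1 < q⁻¹ * (1 - q) * (1 - q ^ (γ + 1)) * (1 - q ^ (γ + 2)))

noncomputable def radiusStarlike (α : ℝ) (f : ℂ → ℂ) : ℝ :=
  sSup {r : ℝ | 0 < r ∧ ∀ z : ℂ, 0 < ‖z‖ → ‖z‖ < r →
    α < (z * deriv f z / f z).re}

noncomputable def radiusConvex (α : ℝ) (f : ℂ → ℂ) : ℝ :=
  sSup {r : ℝ | 0 < r ∧ ∀ z : ℂ, ‖z‖ < r →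
    α < (1 + z * deriv (deriv f) z / deriv f z).re}

noncomputable def fML (γ σ q : ℝ) (z : ℂ) : ℂ :=
  Complex.exp ((1 / ((γ : ℂ) + 1)) *
    Complex.log (z ^ ((γ : ℂ) + 1) * (qGamma q (γ + 1) : ℂ) * qML γ σ q z))

noncomputable def gML (γ σ q : ℝ) (z : ℂ) : ℂ :=
  z * (qGamma q (γ + 1) : ℂ) * qML γ σ q z

noncomputable def hML (γ σ q : ℝ) (z : ℂ) : ℂ :=
  z * (qGamma q (γ + 1) : ℂ) *
    ∑' n : ℕ,
      (((-1) ^ n * σ ^ (2 * n) * q ^ (n * (n - 1)) / qGamma q (2 * n + γ + 1) : ℝ) : ℂ) * z ^ n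

noncomputable def hMLR (γ σ q : ℝ) (x : ℝ) : ℝ :=
  x * qGamma q (γ + 1) *
    ∑' n : ℕ,
      ((-1) ^ n * σ ^ (2 * n) * q ^ (n * (n - 1)) / qGamma q (2 * n + γ + 1)) * x ^ n

/-- Normalized function $g_{0,σ}(z;q) = z·λ_{0,σ}(z;q)$ (using $Γ_q(1)=1$). -/
noncomputable def gML0 (σ q : ℝ) (z : ℂ) : ℂ := z * qML 0 σ q z

/-- Normalized function $h_{0,σ}(z;q)$ (using $Γ_q(1)=1$). -/
noncomputable def hML0 (σ q : ℝ) (z : ℂ) : ℂ :=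
  z * ∑' n : ℕ,
    (((-1) ^ n * σ ^ (2 * n) * q ^ (n * (n - 1)) / qGamma q (2 * n + 1) : ℝ) : ℂ) * z ^ n

lemma summ_aux (a q : ℝ) (hq0 : 0 < q) (hq1 : q < 1) : Summable (fun k : ℕ => ‖-(a * q^k)‖) := by
  have := (summable_geometric_of_lt_one hq0.le hq1).mul_left |a|
  refine this.congr fun k => ?_
  rw [norm_neg, norm_mul, norm_pow, Real.norm_eq_abs, Real.norm_eq_abs, abs_of_pos hq0]

lemma qPoch_ne (a q : ℝ) (hq0 : 0 < q) (hq1 : q < 1) (ha0 : 0 < a) (ha : a < 1) : qPochInf a q ≠ 0 := by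
  have := tprod_one_add_ne_zero_of_summable (f := fun k : ℕ => -(a * q^k)) (fun k => by
    have h1 : q^k ≤ 1 := pow_le_one₀ hq0.le hq1.le
    have h2 : 0 < q^k := pow_pos hq0 k
    have : a * q^k < 1 := by nlinarith
    intro h
    linarith) (summ_aux a q hq0 hq1)
  simpa [qPochInf, sub_eq_add_neg] using this

lemma qPoch_rec (a q : ℝ) (hq0 : 0 < q) (hq1 : q < 1) :
    qPochInf a q = (1 - a) * qPochInf (a * q) q := by
  have hm : Multipliable (fun k : ℕ => 1 + -((a*q) * q^k)) :=
    multipliable_one_add_of_summable (summ_aux (a*q) q hq0 hq1)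
  have := tprod_eq_zero_mul' (f := fun k : ℕ => 1 - a * q^k) (hm.congr fun k => by ring)
  rw [qPochInf, this, qPochInf]
  congr 1
  · simp
  · exact tprod_congr fun k => by ring

lemma qGamma_one (q : ℝ) (hq0 : 0 < q) (hq1 : q < 1) : qGamma q 1 = 1 := by
  have := qPoch_ne q q hq0 hq1 hq0 hq1
  simp [qGamma, this]

lemma qGamma_rec (q x : ℝ) (hq0 : 0 < q) (hq1 : q < 1) (hx : 0 < x) :
    qGamma q (x + 1) = (1 - q^x) / (1 - q) * qGamma q x := by
  have hx1 : q^x < 1 := Real.rpow_lt_one hq0.le hq1 hx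
  have hx0 : 0 < q^x := Real.rpow_pos_of_pos hq0 x
  have e : q^(x+1) = q^x * q := by rw [Real.rpow_add hq0, Real.rpow_one]
  have hne := qPoch_ne (q^x * q) q hq0 hq1 (by positivity) (by nlinarith)
  have h1q : 0 < 1 - q := by linarith
  have e2 : (1-q)^(1 - (x+1)) = (1-q)^(1-x) / (1-q) := by
    rw [← Real.rpow_sub_one h1q.ne']
    congr 1
    ring
  have : 1 - q^x ≠ 0 := by linarith
  rw [qGamma, qGamma, e, e2, qPoch_rec (q^x) q hq0 hq1]
  field_simp

/-- coefficients -/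
noncomputable def cc (q : ℝ) (n : ℕ) : ℝ := q^(n*(n-1)) / qGamma q (2*n+1)

lemma cc_zero (q : ℝ) (hq0 : 0 < q) (hq1 : q < 1) : cc q 0 = 1 := by
  simp [cc, qGamma_one q hq0 hq1]

lemma qG_pos (q : ℝ) (hq0 : 0 < q) (hq1 : q < 1) (n : ℕ) : 0 < qGamma q (n+1) := by
  induction n with
  | zero => simp [qGamma_one q hq0 hq1]
  | succ n ih =>
    push_cast
    rw [qGamma_rec q (n+1) hq0 hq1 (by positivity)]
    have : q^((n:ℝ)+1) < 1 := Real.rpow_lt_one hq0.le hq1 (by positivity)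
    have h1 : 0 < 1 - q := by linarith
    have h2 : 0 < 1 - q^((n:ℝ)+1) := by linarith
    positivity

lemma cc_pos (q : ℝ) (hq0 : 0 < q) (hq1 : q < 1) (n : ℕ) : 0 < cc q n := by
  have := qG_pos q hq0 hq1 (2*n)
  push_cast at this
  rw [cc]
  positivity

lemma cc_succ (q : ℝ) (hq0 : 0 < q) (hq1 : q < 1) (n : ℕ) :
    cc q (n+1) * ((∑ i ∈ Finset.range (2*n+1), q^i) * (∑ i ∈ Finset.range (2*n+2), q^i)) = cc q n * q^(2*n) := by
  have h0 := qG_pos q hq0 hq1 (2*n)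
  push_cast at h0
  have hg : ∀ k : ℕ, (∑ i ∈ Finset.range k, q^i) = (1 - q^k)/(1-q) := by
    intro k
    have : 1 - q ≠ 0 := by linarith
    rw [eq_div_iff this, geom_sum_mul_neg]
  have e1 : qGamma q (2*n+1+1) = (∑ i ∈ Finset.range (2*n+1), q^i) * qGamma q (2*n+1) := by
    rw [qGamma_rec q (2*n+1) hq0 hq1 (by positivity), hg]
    congr 3
    exact_mod_cast Real.rpow_natCast q (2*n+1)
  have e2 : qGamma q (2*((n+1:ℕ):ℝ)+1) = (∑ i ∈ Finset.range (2*n+2), q^i) * qGamma q (2*n+1+1) := by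
    rw [show 2*((n+1:ℕ):ℝ)+1 = (2*n+1+1)+1 by push_cast; ring, qGamma_rec q (2*n+1+1) hq0 hq1 (by positivity), hg]
    congr 3
    rw [show (2*(n:ℝ)+1+1) = ((2*n+2:ℕ):ℝ) by push_cast; ring]
    exact Real.rpow_natCast q (2*n+2)
  have p1 : (∑ i ∈ Finset.range (2*n+1), q^i) ≠ 0 := (Finset.sum_pos (fun i _ => by positivity) (by simp)).ne'
  have p2 : (∑ i ∈ Finset.range (2*n+2), q^i) ≠ 0 := (Finset.sum_pos (fun i _ => by positivity) (by simp)).ne'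
  have e3 : q^((n+1)*(n+1-1)) = q^(n*(n-1)) * q^(2*n) := by
    rw [← pow_add]
    congr 1
    cases n with
    | zero => rfl
    | succ m => simp; ring
  rw [cc, cc, e2, e1, e3]
  field_simp

noncomputable def dd (q : ℝ) (n : ℕ) : ℝ := cc q n * (1+q)^n

lemma dd_pos (q : ℝ) (hq0 : 0 < q) (hq1 : q < 1) (n : ℕ) : 0 < dd q n := by
  have := cc_pos q hq0 hq1 n
  rw [dd]; positivity

lemma dd_succ (q : ℝ) (hq0 : 0 < q) (hq1 : q < 1) (n : ℕ) : dd q (n+1) * (2*n+1) ≤ dd q n := by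
  have h := cc_succ q hq0 hq1 n
  have hc := cc_pos q hq0 hq1 n
  have hc' := cc_pos q hq0 hq1 (n+1)
  have h1 : (2*n+1) * q^(2*n) ≤ ∑ i ∈ Finset.range (2*n+1), q^i := by
    have : ∑ i ∈ Finset.range (2*n+1), q^(2*n) ≤ ∑ i ∈ Finset.range (2*n+1), q^i := by
      refine Finset.sum_le_sum fun i hi => ?_
      have := Finset.mem_range.1 hi
      exact pow_le_pow_of_le_one hq0.le hq1.le (by omega)
    simpa using this
  have h2 : 1 + q ≤ ∑ i ∈ Finset.range (2*n+2), q^i := by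
    have : ∑ i ∈ Finset.range 2, q^i ≤ ∑ i ∈ Finset.range (2*n+2), q^i := by
      refine Finset.sum_le_sum_of_subset_of_nonneg (by simp) fun i _ _ => by positivity
    simpa [Finset.sum_range_succ] using this
  have hq2 : 0 < q^(2*n) := by positivity
  have h3 : cc q (n+1) * ((2*n+1) * q^(2*n) * (1+q)) ≤ cc q n * q^(2*n) := by
    rw [← h]; gcongr
  have h4 : cc q (n+1) * ((2*n+1) * (1+q)) ≤ cc q n := by
    refine le_of_mul_le_mul_right ?_ hq2
    calc _ = _ := by ring
      _ ≤ _ := h3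
  rw [dd, dd]
  calc _ = cc q (n+1) * ((2*n+1) * (1+q)) * (1+q)^n := by ring
    _ ≤ _ := by gcongr

lemma dd_zero (q : ℝ) (hq0 : 0 < q) (hq1 : q < 1) : dd q 0 = 1 := by
  simp [dd, cc_zero q hq0 hq1]

lemma dd_one (q : ℝ) (hq0 : 0 < q) (hq1 : q < 1) : dd q 1 = 1 := by
  have h := cc_succ q hq0 hq1 0
  rw [cc_zero q hq0 hq1] at h
  simpa [Finset.sum_range_succ, dd] using h

lemma dd_two (q : ℝ) (hq0 : 0 < q) (hq1 : q < 1) : dd q 2 = q^2 / ((1+q^2)*(1+q+q^2)) := by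
  have h := cc_succ q hq0 hq1 1
  have h1 := dd_one q hq0 hq1
  simp only [dd] at *
  simp [Finset.sum_range_succ] at h h1
  rw [eq_div_iff (by positivity)]
  have h2 : cc q 2 * (1+q) * ((1+q^2)*(1+q+q^2)) = cc q 1 * q^2 := by
    rw [← h]; ring
  calc _ = cc q 2 * (1+q) * ((1+q^2)*(1+q+q^2)) * (1+q) := by ring
    _ = cc q 1 * (1+q) * q^2 := by rw [h2]; ring
    _ = _ := by rw [h1, one_mul]

lemma dd_two_le (q : ℝ) (hq0 : 0 < q) (hq1 : q < 1) : dd q 2 ≤ 1/6 := by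
  rw [dd_two q hq0 hq1, div_le_div_iff₀ (by positivity) (by norm_num)]
  nlinarith [sq_nonneg (q-1), mul_nonneg hq0.le (sq_nonneg (q-1)), sq_nonneg (q^2-1), mul_nonneg hq0.le (sq_nonneg (q-1))]

lemma cc_le (q : ℝ) (hq0 : 0 < q) (hq1 : q < 1) (n : ℕ) : cc q n ≤ 1 / (n.factorial : ℝ) := by
  have hd : dd q n ≤ 1 / (n.factorial : ℝ) := by
    induction n with
    | zero => simp [dd_zero q hq0 hq1]
    | succ n ih =>
      have h := dd_succ q hq0 hq1 n
      have hp := dd_pos q hq0 hq1 (n+1)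
      have hn : (0:ℝ) ≤ n := n.cast_nonneg
      rw [Nat.factorial_succ]
      push_cast
      rw [mul_comm, ← div_div, le_div_iff₀ (by positivity)]
      nlinarith
  refine le_trans ?_ hd
  rw [dd]
  exact le_mul_of_one_le_right (cc_pos q hq0 hq1 n).le (one_le_pow₀ (by linarith))

/-! ### analytic part -/

def FSmall (e : ℕ → ℂ) : Prop := ∃ K : ℝ, 0 ≤ K ∧ ∀ n, ‖e n‖ ≤ K^n / (n.factorial : ℝ)

noncomputable def SS (e : ℕ → ℂ) (p : ℕ) (z : ℂ) : ℂ := ∑' n, e n * z^(p*n)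

lemma FSmall.mul {e : ℕ → ℂ} (h : FSmall e) (p : ℕ) (hp : p ≤ 2) : FSmall (fun n => (p*n+1 : ℂ) * e n) := by
  obtain ⟨K, hK, h⟩ := h
  refine ⟨3*K, by positivity, fun n => ?_⟩
  have h3 : (p*n+1:ℝ) ≤ 3^n := by
    have : 1 + (n:ℝ) * 2 ≤ (1+2)^n := one_add_mul_le_pow (by norm_num) n
    have hp' : (p:ℝ) ≤ 2 := by exact_mod_cast hp
    have : (p:ℝ) * n ≤ 2 * n := by gcongr
    norm_num at *
    linarith
  have e1 : ‖(p*n+1 : ℂ)‖ = (p*n+1:ℝ) := by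
    have : (p*n+1 : ℂ) = ((p*n+1:ℝ):ℂ) := by push_cast; rfl
    rw [this, Complex.norm_real, Real.norm_eq_abs, abs_of_nonneg (by positivity)]
  rw [norm_mul, e1, mul_pow, mul_div_assoc]
  gcongr
  exact h n

lemma FSmall.bd {e : ℕ → ℂ} (h : FSmall e) (p : ℕ) (R : ℝ) (hR : 0 ≤ R) :
    ∃ u : ℕ → ℝ, Summable u ∧ ∀ n w, ‖w‖ ≤ R → ‖e n * w^(p*n)‖ ≤ u n := by
  obtain ⟨K, hK, h⟩ := h
  refine ⟨fun n => (K * R^p)^n / (n.factorial:ℝ), Real.summable_pow_div_factorial _, fun n w hw => ?_⟩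
  change _ ≤ (K * R^p)^n / (n.factorial:ℝ)
  rw [norm_mul, norm_pow, mul_pow, ← pow_mul, mul_div_right_comm]
  gcongr
  exact h n

lemma FSmall.summable {e : ℕ → ℂ} (h : FSmall e) (p : ℕ) (z : ℂ) : Summable (fun n => e n * z^(p*n)) := by
  obtain ⟨u, hu, hb⟩ := h.bd p ‖z‖ (norm_nonneg z)
  exact Summable.of_norm_bounded hu fun n => hb n z le_rfl

lemma FSmall.diff {e : ℕ → ℂ} (h : FSmall e) (p : ℕ) : Differentiable ℂ (SS e p) := by
  intro z
  obtain ⟨u, hu, hb⟩ := h.bd p (‖z‖+1) (by positivity)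
  have := Complex.differentiableOn_tsum_of_summable_norm (F := fun n w => e n * w^(p*n)) (U := Metric.ball 0 (‖z‖+1)) hu
    (fun i => by fun_prop) Metric.isOpen_ball (fun i w hw => hb i w (by simpa using (mem_ball_zero_iff.1 hw).le))
  exact this.differentiableAt (Metric.isOpen_ball.mem_nhds (by simp))

lemma FSmall.deriv {e : ℕ → ℂ} (h : FSmall e) (p : ℕ) :
    deriv (fun z => z * SS e p z) = SS (fun n => (p*n+1 : ℂ) * e n) p := by
  funext z
  obtain ⟨u, hu, hb⟩ := h.bd p (‖z‖+1) (by positivity)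
  have hs := Complex.hasSum_deriv_of_summable_norm (F := fun n w => e n * w^(p*n+1)) (U := Metric.ball 0 (‖z‖+1)) (z := z)
    (u := fun n => u n * (‖z‖+1)) (hu.mul_right _)
    (fun i => by fun_prop) Metric.isOpen_ball (fun i w hw => by
      have hw' := (mem_ball_zero_iff.1 hw).le
      have := hb i w hw'
      rw [pow_succ, ← mul_assoc, norm_mul]
      exact mul_le_mul this hw' (norm_nonneg _) ((norm_nonneg _).trans this)) (by simp)
  have e1 : (fun w : ℂ => ∑' n, e n * w^(p*n+1)) = fun z => z * SS e p z := by
    funext w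
    rw [SS, ← tsum_mul_left]
    exact tsum_congr fun n => by ring
  rw [e1] at hs
  rw [← hs.tsum_eq, SS]
  refine tsum_congr fun n => ?_
  simp
  ring

lemma FSmall.conv {e : ℕ → ℂ} (h : FSmall e) (p : ℕ) (hp : p ≤ 2) (z : ℂ)
    (hz : SS (fun n => (p*n+1 : ℂ) * e n) p z ≠ 0) :
    1 + z * _root_.deriv (_root_.deriv (fun z => z * SS e p z)) z / _root_.deriv (fun z => z * SS e p z) z =
      SS (fun n => (p*n+1 : ℂ) * ((p*n+1 : ℂ) * e n)) p z / SS (fun n => (p*n+1 : ℂ) * e n) p z := by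
  have h2 := h.mul p hp
  rw [h.deriv p, ← h2.deriv p]
  have := deriv_fun_mul (𝕜 := ℂ) (c := fun z => z) (d := SS (fun n => (p*n+1 : ℂ) * e n) p) (x := z) (by fun_prop) (h2.diff p z)
  rw [this]
  simp
  field_simp

lemma tail_term (p : ℕ) (hp : p = 1 ∨ p = 2) (d : ℕ → ℝ) (hd0 : ∀ n, 0 ≤ d n)
    (hd : ∀ n : ℕ, d (n+1) * (2 * n + 1) ≤ d n) (n : ℕ) :
    ((p:ℝ) * (n+3:ℕ) + 1)^2 * d (n+3) / (((p:ℝ)+1)^2)^(n+3) * (6/5)^(n+3) ≤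
      (4/25) * (((p:ℝ) * 2 + 1)^2 * d 2 / (((p:ℝ)+1)^2)^2) * (1/10)^n := by
  induction n with
  | zero =>
    have h := hd 2
    have h2 := hd0 3
    norm_num at h
    rcases hp with rfl | rfl <;> norm_num <;> nlinarith [hd0 2]
  | succ n ih =>
    have h := hd (n+3)
    have h0 := hd0 (n+3)
    have h1 := hd0 (n+4)
    set D := d (n+3) with hD
    have e : n + 1 + 3 = n + 4 := by ring
    rw [e]
    set D' := d (n+4) with hD'
    have h' : D' * (2 * (n+3:ℝ) + 1) ≤ D := by
      have : d (n+3+1) * (2 * ((n+3:ℕ):ℝ) + 1) ≤ D := h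
      push_cast at this
      exact this
    have key : ((p:ℝ) * (n+4:ℕ) + 1)^2 * D' / ((p:ℝ)+1)^2 * (6/5) ≤ (1/10) * (((p:ℝ) * (n+3:ℕ) + 1)^2 * D) := by
      have hn : (0:ℝ) ≤ n := Nat.cast_nonneg n
      have : ((p:ℝ) * (n+4:ℕ) + 1)^2 / ((p:ℝ)+1)^2 * (6/5) ≤ (1/10) * ((p:ℝ) * (n+3:ℕ) + 1)^2 * (2 * (n+3:ℝ) + 1) := by
        rcases hp with rfl | rfl <;> push_cast <;> norm_num <;> nlinarith [pow_nonneg hn 2, pow_nonneg hn 3]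
      calc _ = ((p:ℝ) * (n+4:ℕ) + 1)^2 / ((p:ℝ)+1)^2 * (6/5) * D' := by ring
        _ ≤ (1/10) * ((p:ℝ) * (n+3:ℕ) + 1)^2 * (2 * (n+3:ℝ) + 1) * D' := by gcongr
        _ = (1/10) * ((p:ℝ) * (n+3:ℕ) + 1)^2 * (D' * (2 * (n+3:ℝ) + 1)) := by ring
        _ ≤ (1/10) * ((p:ℝ) * (n+3:ℕ) + 1)^2 * D := by gcongr
        _ = _ := by ring
    have hk : ((p:ℝ)+1)^2 ≠ 0 := by positivity
    calc _ = (((p:ℝ) * (n+4:ℕ) + 1)^2 * D' / ((p:ℝ)+1)^2 * (6/5)) * ((6/5)^(n+3) / (((p:ℝ)+1)^2)^(n+3)) := by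
            rw [show n + 4 = (n+3)+1 by ring, pow_succ (((p:ℝ)+1)^2) (n+3), pow_succ (6/5:ℝ) (n+3)]
            field_simp
      _ ≤ ((1/10) * (((p:ℝ) * (n+3:ℕ) + 1)^2 * D)) * ((6/5)^(n+3) / (((p:ℝ)+1)^2)^(n+3)) := by gcongr
      _ = (1/10) * (((p:ℝ) * (n+3:ℕ) + 1)^2 * D / (((p:ℝ)+1)^2)^(n+3) * (6/5)^(n+3)) := by ring
      _ ≤ (1/10) * ((4/25) * (((p:ℝ) * 2 + 1)^2 * d 2 / (((p:ℝ)+1)^2)^2) * (1/10)^n) := by gcongr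
      _ = _ := by ring

/-- abstract tail bound: alternating sums with bounded coefficient. -/
lemma tail_sum (a : ℕ → ℝ) (s : ℂ) (M : ℝ) (hs : ‖s‖ ≤ 6/5)
    (h : ∀ n, |a (n+3)| * (6/5)^(n+3) ≤ M * (1/10)^n) :
    Summable (fun n => ((a n : ℝ) : ℂ) * s^n) ∧
    ‖(∑' n, ((a n : ℝ) : ℂ) * s^n) - (a 0 + a 1 * s + a 2 * s^2)‖ ≤ M * (10/9) := by
  have hb : ∀ n, ‖((a (n+3) : ℝ) : ℂ) * s^(n+3)‖ ≤ M * (1/10)^n := by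
    intro n
    rw [norm_mul, norm_pow, Complex.norm_real, Real.norm_eq_abs]
    refine le_trans ?_ (h n)
    gcongr
  have hg : HasSum (fun n : ℕ => M * (1/10:ℝ)^n) (M * (10/9)) := by
    have := (hasSum_geometric_of_lt_one (r := (1/10:ℝ)) (by norm_num) (by norm_num)).mul_left M
    have e : (1 - 1/10:ℝ)⁻¹ = 10/9 := by norm_num
    rwa [e] at this
  have hsum : Summable (fun n => ((a n : ℝ) : ℂ) * s^n) := by
    rw [← summable_nat_add_iff 3]
    exact Summable.of_norm_bounded hg.summable hb
  refine ⟨hsum, ?_⟩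
  rw [← hsum.sum_add_tsum_nat_add 3]
  have := tsum_of_norm_bounded hg hb
  have e : ((a 0 : ℂ) + a 1 * s + a 2 * s^2) = ∑ i ∈ Finset.range 3, ((a i : ℝ) : ℂ) * s^i := by
    simp [Finset.sum_range_succ]
  rw [e, add_sub_cancel_left]
  exact this

lemma poly_low (p : ℕ) (hp : p = 1 ∨ p = 2) (t : ℝ) (ht : 0 < t) (ht' : t ≤ 1/10) (s : ℂ) (hs : ‖s‖ ≤ 1) :
    ‖(p/(p+1) : ℂ) * s - (2*p/(2*p+1) : ℂ) * t * s^2‖ + t*(2/5) < ‖1 - (1/(p+1) : ℂ) * s + (1/(2*p+1) : ℂ) * t * s^2‖ := by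
  have h1 : ‖(p/(p+1) : ℂ) * s - (2*p/(2*p+1) : ℂ) * t * s^2‖ ≤ ‖(p/(p+1) : ℂ) - (2*p/(2*p+1) : ℂ) * t * s‖ := by
    have : (p/(p+1) : ℂ) * s - (2*p/(2*p+1) : ℂ) * t * s^2 = ((p/(p+1) : ℂ) - (2*p/(2*p+1) : ℂ) * t * s) * s := by ring
    rw [this, norm_mul]
    exact mul_le_of_le_one_right (norm_nonneg _) hs
  refine lt_of_le_of_lt (add_le_add_left h1 _) (lt_of_lt_of_le ?_ (Complex.re_le_norm _))
  rw [← lt_sub_iff_add_lt]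
  obtain ⟨x, y⟩ := s
  have hxy : x^2 + y^2 ≤ 1 := by
    have := Complex.sq_norm (⟨x, y⟩ : ℂ)
    rw [Complex.normSq_mk] at this
    nlinarith [norm_nonneg (⟨x, y⟩ : ℂ)]
  have hx1 : x ≤ 1 := by nlinarith [sq_nonneg y]
  have hx2 : -1 ≤ x := by nlinarith [sq_nonneg y]
  rw [Complex.norm_eq_sqrt_sq_add_sq]
  rcases hp with rfl | rfl
  · have e1 : ((((1:ℕ):ℂ)/((1:ℕ)+1) : ℂ) - (2*(1:ℕ)/(2*(1:ℕ)+1) : ℂ) * t * (⟨x,y⟩:ℂ)) = ⟨1/2 - 2/3*t*x, - (2/3*t*y)⟩ := by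
      rw [show (((1:ℕ):ℂ)/((1:ℕ)+1) : ℂ) = ((1/2:ℝ):ℂ) by norm_num, show (2*(1:ℕ)/(2*(1:ℕ)+1) : ℂ) = ((2/3:ℝ):ℂ) by norm_num]
      apply Complex.ext <;> simp [-Complex.ofReal_div]
    have e2 : (1 - (1/((1:ℕ)+1) : ℂ) * (⟨x,y⟩:ℂ) + (1/(2*(1:ℕ)+1) : ℂ) * t * (⟨x,y⟩:ℂ)^2).re = 1 - 1/2*x+1/3*t*(x^2-y^2) := by
      rw [show (1/((1:ℕ)+1) : ℂ) = ((1/2:ℝ):ℂ) by norm_num, show (1/(2*(1:ℕ)+1) : ℂ) = ((1/3:ℝ):ℂ) by norm_num]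
      simp [-Complex.ofReal_div, -Complex.ofReal_inv, pow_two]
    rw [e1, e2]
    have hsq : √((1/2 - 2/3*t*x)^2 + (-(2/3*t*y))^2) ≤ 1/2 - 2/3*t*x + t*y^2/10 := by
      have htx : t * x ≤ 1/10 := by nlinarith
      have hy := sq_nonneg y
      rw [Real.sqrt_le_iff]
      refine ⟨by nlinarith [mul_nonneg ht.le hy], ?_⟩
      have hty : 0 ≤ t * y^2 := by positivity
      nlinarith [mul_nonneg hty (sub_nonneg.2 ht'), mul_nonneg hty (sub_nonneg.2 htx), sq_nonneg (t*y^2)]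
    refine lt_of_le_of_lt hsq ?_
    have h5 : 0 ≤ (1 - x) * (1/10 - t) := mul_nonneg (by linarith) (by linarith)
    nlinarith [mul_nonneg ht.le (sub_nonneg.2 hxy), mul_nonneg ht.le (sq_nonneg (1-x))]
  · have e1 : ((((2:ℕ):ℂ)/((2:ℕ)+1) : ℂ) - (2*(2:ℕ)/(2*(2:ℕ)+1) : ℂ) * t * (⟨x,y⟩:ℂ)) = ⟨2/3 - 4/5*t*x, - (4/5*t*y)⟩ := by
      rw [show (((2:ℕ):ℂ)/((2:ℕ)+1) : ℂ) = ((2/3:ℝ):ℂ) by norm_num, show (2*(2:ℕ)/(2*(2:ℕ)+1) : ℂ) = ((4/5:ℝ):ℂ) by norm_num]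
      apply Complex.ext <;> simp [-Complex.ofReal_div]
    have e2 : (1 - (1/((2:ℕ)+1) : ℂ) * (⟨x,y⟩:ℂ) + (1/(2*(2:ℕ)+1) : ℂ) * t * (⟨x,y⟩:ℂ)^2).re = 1 - 1/3*x+1/5*t*(x^2-y^2) := by
      rw [show (1/((2:ℕ)+1) : ℂ) = ((1/3:ℝ):ℂ) by norm_num, show (1/(2*(2:ℕ)+1) : ℂ) = ((1/5:ℝ):ℂ) by norm_num]
      simp [-Complex.ofReal_div, -Complex.ofReal_inv, pow_two]
    rw [e1, e2]
    have hsq : √((2/3 - 4/5*t*x)^2 + (-(4/5*t*y))^2) ≤ 2/3 - 4/5*t*x + t*y^2/10 := by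
      have htx : t * x ≤ 1/10 := by nlinarith
      have hy := sq_nonneg y
      rw [Real.sqrt_le_iff]
      refine ⟨by nlinarith [mul_nonneg ht.le hy], ?_⟩
      have hty : 0 ≤ t * y^2 := by positivity
      nlinarith [mul_nonneg hty (sub_nonneg.2 ht'), mul_nonneg hty (sub_nonneg.2 htx), sq_nonneg (t*y^2)]
    refine lt_of_le_of_lt hsq ?_
    have h5 : 0 ≤ (1 - x) * (1/10 - t) := mul_nonneg (by linarith) (by linarith)
    nlinarith [mul_nonneg ht.le (sub_nonneg.2 hxy), mul_nonneg ht.le (sq_nonneg (1-x))]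

noncomputable def ee (q σ : ℝ) (n : ℕ) : ℂ := (((-1)^n * σ^(2*n) * cc q n : ℝ) : ℂ)

lemma ee_small (q σ : ℝ) (hq0 : 0 < q) (hq1 : q < 1) : FSmall (ee q σ) := by
  refine ⟨σ^2, by positivity, fun n => ?_⟩
  rw [ee, Complex.norm_real, Real.norm_eq_abs, abs_mul, abs_mul, abs_pow, abs_neg, abs_one, one_pow, one_mul,
    abs_of_pos (cc_pos q hq0 hq1 n), pow_mul, abs_of_nonneg (by positivity : 0 ≤ (σ^2)^n), div_eq_mul_one_div]
  gcongr
  exact cc_le q hq0 hq1 n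

/-- normalised signed coefficients -/
noncomputable def aA (q : ℝ) (p n : ℕ) : ℝ := (-1)^n * ((p*n+1:ℝ)^2 * dd q n / (((p:ℝ)+1)^2)^n)
noncomputable def aB (q : ℝ) (p n : ℕ) : ℝ := (-1)^n * ((p*n+1:ℝ) * dd q n / (((p:ℝ)+1)^2)^n)
noncomputable def tt (q : ℝ) (p : ℕ) : ℝ := (p*2+1:ℝ)^2 * dd q 2 / (((p:ℝ)+1)^2)^2

lemma tt_pos (q : ℝ) (hq0 : 0 < q) (hq1 : q < 1) (p : ℕ) : 0 < tt q p := by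
  have := dd_pos q hq0 hq1 2
  rw [tt]; positivity

lemma tt_le (q : ℝ) (hq0 : 0 < q) (hq1 : q < 1) (p : ℕ) (hp : p = 1 ∨ p = 2) : tt q p ≤ 1/10 := by
  have := dd_two_le q hq0 hq1
  rw [tt]
  rcases hp with rfl | rfl <;> norm_num <;> linarith

lemma aA_abs (q : ℝ) (hq0 : 0 < q) (hq1 : q < 1) (p n : ℕ) : |aA q p n| = (p*n+1:ℝ)^2 * dd q n / (((p:ℝ)+1)^2)^n := by
  have := dd_pos q hq0 hq1 n
  rw [aA, abs_mul, abs_pow, abs_neg, abs_one, one_pow, one_mul, abs_of_nonneg (by positivity)]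

lemma aA_tail (q : ℝ) (hq0 : 0 < q) (hq1 : q < 1) (p : ℕ) (hp : p = 1 ∨ p = 2) (n : ℕ) :
    |aA q p (n+3)| * (6/5)^(n+3) ≤ (4/25) * tt q p * (1/10)^n := by
  rw [aA_abs q hq0 hq1]
  exact tail_term p hp (dd q) (fun n => (dd_pos q hq0 hq1 n).le) (dd_succ q hq0 hq1) n

lemma aB_le (q : ℝ) (hq0 : 0 < q) (hq1 : q < 1) (p n : ℕ) : |aB q p n| ≤ |aA q p n| := by
  have := dd_pos q hq0 hq1 n
  rw [aA_abs q hq0 hq1, aB, abs_mul, abs_pow, abs_neg, abs_one, one_pow, one_mul, abs_of_nonneg (by positivity)]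
  have h1 : (1:ℝ) ≤ p*n+1 := by
    have : (0:ℝ) ≤ p * n := by positivity
    linarith
  gcongr
  nlinarith

lemma aD_le (q : ℝ) (hq0 : 0 < q) (hq1 : q < 1) (p n : ℕ) : |aA q p n - aB q p n| ≤ |aA q p n| := by
  have := dd_pos q hq0 hq1 n
  have e : aA q p n - aB q p n = (-1)^n * ((p*n+1:ℝ)*(p*n) * dd q n / (((p:ℝ)+1)^2)^n) := by
    rw [aA, aB]; ring
  rw [aA_abs q hq0 hq1, e, abs_mul, abs_pow, abs_neg, abs_one, one_pow, one_mul, abs_of_nonneg (by positivity)]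
  have h1 : (0:ℝ) ≤ p * n := by positivity
  gcongr
  nlinarith

lemma aB_tail (q : ℝ) (hq0 : 0 < q) (hq1 : q < 1) (p : ℕ) (hp : p = 1 ∨ p = 2) (n : ℕ) :
    |aB q p (n+3)| * (6/5)^(n+3) ≤ (4/25) * tt q p * (1/10)^n := by
  refine le_trans ?_ (aA_tail q hq0 hq1 p hp n)
  exact mul_le_mul_of_nonneg_right (aB_le q hq0 hq1 p _) (by positivity)

lemma aD_tail (q : ℝ) (hq0 : 0 < q) (hq1 : q < 1) (p : ℕ) (hp : p = 1 ∨ p = 2) (n : ℕ) :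
    |aA q p (n+3) - aB q p (n+3)| * (6/5)^(n+3) ≤ (4/25) * tt q p * (1/10)^n := by
  refine le_trans ?_ (aA_tail q hq0 hq1 p hp n)
  exact mul_le_mul_of_nonneg_right (aD_le q hq0 hq1 p _) (by positivity)

lemma aA0 (q : ℝ) (hq0 : 0 < q) (hq1 : q < 1) (p : ℕ) : aA q p 0 = 1 := by
  simp [aA, dd_zero q hq0 hq1]
lemma aB0 (q : ℝ) (hq0 : 0 < q) (hq1 : q < 1) (p : ℕ) : aB q p 0 = 1 := by
  simp [aB, dd_zero q hq0 hq1]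
lemma aA1 (q : ℝ) (hq0 : 0 < q) (hq1 : q < 1) (p : ℕ) : aA q p 1 = -1 := by
  have : (p:ℝ)+1 ≠ 0 := by positivity
  simp [aA, dd_one q hq0 hq1, this]
lemma aB1 (q : ℝ) (hq0 : 0 < q) (hq1 : q < 1) (p : ℕ) : aB q p 1 = -(1/(p+1)) := by
  have : (p:ℝ)+1 ≠ 0 := by positivity
  simp [aB, dd_one q hq0 hq1]
  field_simp
lemma aA2 (q : ℝ) (p : ℕ) : aA q p 2 = tt q p := by
  simp [aA, tt]
lemma aB2 (q : ℝ) (p : ℕ) : aB q p 2 = 1/(2*p+1) * tt q p := by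
  have : (2*(p:ℝ)+1) ≠ 0 := by positivity
  simp [aB, tt]
  field_simp

lemma term_eq (q σ : ℝ) (hq0 : 0 < q) (p n : ℕ) (z : ℂ) (c : ℝ) :
    (c:ℂ) * ee q σ n * z^(p*n) =
      (((-1)^n * (c * dd q n / (((p:ℝ)+1)^2)^n) : ℝ):ℂ) * ((((p:ℝ)+1)^2 * σ^2 / (1+q) : ℝ) * z^p)^n := by
  have h1 : ((p:ℂ)+1) ≠ 0 := by exact_mod_cast Nat.succ_ne_zero p
  have h2 : (1+(q:ℂ)) ≠ 0 := by
    have : (1+q) ≠ 0 := by positivity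
    exact_mod_cast this
  rw [ee, dd, mul_pow, ← pow_mul]
  push_cast
  rw [div_pow, mul_pow, ← pow_mul, ← pow_mul]
  field_simp
  rw [pow_mul z p n]

lemma SA_eq (q σ : ℝ) (hq0 : 0 < q) (p : ℕ) (z : ℂ) :
    SS (fun n => (p*n+1 : ℂ) * ((p*n+1 : ℂ) * ee q σ n)) p z =
      ∑' n, ((aA q p n : ℝ):ℂ) * ((((p:ℝ)+1)^2 * σ^2 / (1+q) : ℝ) * z^p)^n := by
  rw [SS]
  refine tsum_congr fun n => ?_
  rw [aA, ← term_eq q σ hq0]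
  push_cast
  ring

lemma SB_eq (q σ : ℝ) (hq0 : 0 < q) (p : ℕ) (z : ℂ) :
    SS (fun n => (p*n+1 : ℂ) * ee q σ n) p z =
      ∑' n, ((aB q p n : ℝ):ℂ) * ((((p:ℝ)+1)^2 * σ^2 / (1+q) : ℝ) * z^p)^n := by
  rw [SS]
  refine tsum_congr fun n => ?_
  rw [aB, ← term_eq q σ hq0]
  push_cast
  ring

lemma core_low (q : ℝ) (hq0 : 0 < q) (hq1 : q < 1) (p : ℕ) (hp : p = 1 ∨ p = 2) (s : ℂ) (hs : ‖s‖ ≤ 1) :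
    ‖(∑' n, ((aA q p n : ℝ):ℂ) * s^n) - ∑' n, ((aB q p n : ℝ):ℂ) * s^n‖ < ‖∑' n, ((aB q p n : ℝ):ℂ) * s^n‖ := by
  have hs' : ‖s‖ ≤ 6/5 := hs.trans (by norm_num)
  have ht := tt_pos q hq0 hq1 p
  obtain ⟨sA, _⟩ := tail_sum (aA q p) s _ hs' (aA_tail q hq0 hq1 p hp)
  obtain ⟨sB, nB⟩ := tail_sum (aB q p) s _ hs' (aB_tail q hq0 hq1 p hp)
  obtain ⟨sD, nD⟩ := tail_sum (fun n => aA q p n - aB q p n) s _ hs' (aD_tail q hq0 hq1 p hp)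
  have e : (∑' n, ((aA q p n : ℝ):ℂ) * s^n) - ∑' n, ((aB q p n : ℝ):ℂ) * s^n =
      ∑' n, ((aA q p n - aB q p n : ℝ):ℂ) * s^n := by
    rw [← sA.tsum_sub sB]
    refine tsum_congr fun n => ?_
    push_cast; ring
  rw [e]
  have hl := poly_low p hp (tt q p) ht (tt_le q hq0 hq1 p hp) s hs
  have h1 : ((p:ℂ)+1) ≠ 0 := by exact_mod_cast Nat.succ_ne_zero p
  have h2 : (2*(p:ℂ)+1) ≠ 0 := by exact_mod_cast Nat.succ_ne_zero (2*p)
  have eD : (((aA q p 0 - aB q p 0 : ℝ):ℂ) + (aA q p 1 - aB q p 1 : ℝ) * s + (aA q p 2 - aB q p 2 : ℝ) * s^2) =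
      -((p/(p+1) : ℂ) * s - (2*p/(2*p+1) : ℂ) * (tt q p) * s^2) := by
    rw [aA0 q hq0 hq1, aB0 q hq0 hq1, aA1 q hq0 hq1, aB1 q hq0 hq1, aA2, aB2]
    push_cast
    have g1 : (p:ℂ)/(p+1) = 1 - 1/(p+1) := by field_simp; ring
    have g2 : 2*(p:ℂ)/(2*p+1) = 1 - 1/(2*p+1) := by rw [eq_sub_iff_add_eq, ← add_div, div_self h2]
    rw [g1, g2]
    ring
  have eB : (((aB q p 0 : ℝ):ℂ) + (aB q p 1 : ℝ) * s + (aB q p 2 : ℝ) * s^2) =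
      1 - (1/(p+1) : ℂ) * s + (1/(2*p+1) : ℂ) * (tt q p) * s^2 := by
    rw [aB0 q hq0 hq1, aB1 q hq0 hq1, aB2]
    push_cast
    ring
  rw [eD] at nD
  rw [eB] at nB
  set D := ∑' n, ((aA q p n - aB q p n : ℝ):ℂ) * s^n
  set B := ∑' n, ((aB q p n : ℝ):ℂ) * s^n
  have i1 := norm_sub_norm_le D (-((p/(p+1) : ℂ) * s - (2*p/(2*p+1) : ℂ) * (tt q p) * s^2))
  rw [norm_neg] at i1
  have i2 := norm_sub_norm_le (1 - (1/(p+1) : ℂ) * s + (1/(2*p+1) : ℂ) * (tt q p) * s^2) B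
  rw [norm_sub_rev] at i2
  linarith

lemma core_up (q : ℝ) (hq0 : 0 < q) (hq1 : q < 1) (p : ℕ) (hp : p = 1 ∨ p = 2) :
    ∃ a b : ℝ, a ≤ 0 ∧ 0 < b ∧ (∑' n, ((aA q p n : ℝ):ℂ) * ((1 + 2 * tt q p : ℝ):ℂ)^n) = a ∧
      (∑' n, ((aB q p n : ℝ):ℂ) * ((1 + 2 * tt q p : ℝ):ℂ)^n) = b := by
  have ht := tt_pos q hq0 hq1 p
  have ht' := tt_le q hq0 hq1 p hp
  set t := tt q p with htt
  set s : ℝ := 1 + 2 * t with hs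
  have hs' : ‖(s:ℂ)‖ ≤ 6/5 := by
    rw [Complex.norm_real, Real.norm_eq_abs, abs_of_nonneg (by linarith)]
    linarith
  obtain ⟨_, nA⟩ := tail_sum (aA q p) s _ hs' (aA_tail q hq0 hq1 p hp)
  obtain ⟨_, nB⟩ := tail_sum (aB q p) s _ hs' (aB_tail q hq0 hq1 p hp)
  have eA : (∑' n, ((aA q p n : ℝ):ℂ) * (s:ℂ)^n) = ((∑' n, aA q p n * s^n : ℝ) : ℂ) := by
    rw [Complex.ofReal_tsum]; push_cast; rfl
  have eB : (∑' n, ((aB q p n : ℝ):ℂ) * (s:ℂ)^n) = ((∑' n, aB q p n * s^n : ℝ) : ℂ) := by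
    rw [Complex.ofReal_tsum]; push_cast; rfl
  rw [eA] at nA
  rw [eB] at nB
  refine ⟨_, _, ?_, ?_, eA, eB⟩
  · set a := ∑' n, aA q p n * s^n
    have e : (a:ℂ) - (aA q p 0 + aA q p 1 * s + aA q p 2 * s^2) = ((a - (1 - s + t * s^2) : ℝ):ℂ) := by
      rw [aA0 q hq0 hq1, aA1 q hq0 hq1, aA2]
      push_cast; ring
    rw [e, Complex.norm_real, Real.norm_eq_abs, abs_le, ← htt] at nA
    have : 1 - s + t * s^2 ≤ t * (-(1/2)) := by
      rw [hs]; nlinarith [mul_pos ht ht, mul_nonneg ht.le (sub_nonneg.2 ht'), mul_nonneg (mul_pos ht ht).le (sub_nonneg.2 ht')]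
    linarith [nA.2]
  · set b := ∑' n, aB q p n * s^n
    have e : (b:ℂ) - (aB q p 0 + aB q p 1 * s + aB q p 2 * s^2) = ((b - (1 - 1/(p+1) * s + 1/(2*p+1) * t * s^2) : ℝ):ℂ) := by
      rw [aB0 q hq0 hq1, aB1 q hq0 hq1, aB2]
      push_cast; ring
    rw [e, Complex.norm_real, Real.norm_eq_abs, abs_le, ← htt] at nB
    have h1 : (1:ℝ)/(p+1) ≤ 1/2 := by
      rcases hp with rfl | rfl <;> norm_num
    have h2 : 0 ≤ 1/(2*(p:ℝ)+1) * t * s^2 := by positivity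
    have h3 : (1:ℝ)/(p+1) * s ≤ 1/2 * s := mul_le_mul_of_nonneg_right h1 (by linarith)
    linarith [nB.1]

lemma generic (q σ : ℝ) (hq0 : 0 < q) (hq1 : q < 1) (hσ : 0 < σ) (p : ℕ) (hp : p = 1 ∨ p = 2)
    (R x : ℝ) (hR : 0 ≤ R) (hx : 0 < x) (hRp : R^p = (1+q)/((p+1)^2*σ^2))
    (hxp : x^p = (1+q)/((p+1)^2*σ^2) * (1 + 2 * tt q p)) :
    R < radiusConvex 0 (fun z => z * SS (ee q σ) p z) ∧ radiusConvex 0 (fun z => z * SS (ee q σ) p z) ≤ x := by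
  have hp2 : p ≤ 2 := by omega
  have hsm := ee_small q σ hq0 hq1
  have hsB := hsm.mul p hp2
  have hsA := hsB.mul p hp2
  have hub : ∀ r ∈ {r : ℝ | 0 < r ∧ ∀ z : ℂ, ‖z‖ < r →
    0 < (1 + z * deriv (deriv (fun z => z * SS (ee q σ) p z)) z / deriv (fun z => z * SS (ee q σ) p z) z).re}, r ≤ x := by
    rintro r ⟨hr, h⟩
    by_contra! hlt
    have h := h x (by rwa [Complex.norm_real, Real.norm_eq_abs, abs_of_pos hx])
    obtain ⟨a, b, ha, hb, eA, eB⟩ := core_up q hq0 hq1 p hp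
    have es : ((((p:ℝ)+1)^2 * σ^2 / (1+q) : ℝ) : ℂ) * (x:ℂ)^p = ((1 + 2 * tt q p : ℝ):ℂ) := by
      rw [← Complex.ofReal_pow, ← Complex.ofReal_mul, hxp]
      congr 1
      field_simp
    have eB' := SB_eq q σ hq0 p x
    rw [es, eB] at eB'
    have eA' := SA_eq q σ hq0 p x
    rw [es, eA] at eA'
    rw [hsm.conv p hp2 x (by rw [eB']; exact_mod_cast hb.ne'), eB', eA', ← Complex.ofReal_div, Complex.ofReal_re] at h
    exact absurd h (not_lt.2 (div_nonpos_of_nonpos_of_nonneg ha hb.le))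
  have hopen : IsOpen {z : ℂ | ‖SS (fun n => (p*n+1 : ℂ) * ((p*n+1 : ℂ) * ee q σ n)) p z - SS (fun n => (p*n+1 : ℂ) * ee q σ n) p z‖ <
      ‖SS (fun n => (p*n+1 : ℂ) * ee q σ n) p z‖} :=
    isOpen_lt ((hsA.diff p).continuous.sub (hsB.diff p).continuous).norm (hsB.diff p).continuous.norm
  have hsub : Metric.closedBall (0:ℂ) R ⊆ {z : ℂ | ‖SS (fun n => (p*n+1 : ℂ) * ((p*n+1 : ℂ) * ee q σ n)) p z - SS (fun n => (p*n+1 : ℂ) * ee q σ n) p z‖ <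
      ‖SS (fun n => (p*n+1 : ℂ) * ee q σ n) p z‖} := by
    intro z hz
    rw [mem_closedBall_zero_iff] at hz
    rw [Set.mem_ofPred_eq, SA_eq q σ hq0, SB_eq q σ hq0]
    apply core_low q hq0 hq1 p hp
    rw [norm_mul, norm_pow, Complex.norm_real, Real.norm_eq_abs, abs_of_nonneg (by positivity)]
    calc _ ≤ ((p:ℝ)+1)^2 * σ^2 / (1+q) * R^p := by gcongr
      _ = 1 := by rw [hRp]; field_simp
  obtain ⟨δ, hδ, hth⟩ := (isCompact_closedBall (0:ℂ) R).exists_thickening_subset_open hopen hsub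
  rw [thickening_closedBall hδ hR] at hth
  have hmem : δ + R ∈ {r : ℝ | 0 < r ∧ ∀ z : ℂ, ‖z‖ < r →
    0 < (1 + z * deriv (deriv (fun z => z * SS (ee q σ) p z)) z / deriv (fun z => z * SS (ee q σ) p z) z).re} := by
    refine ⟨by positivity, fun z hz => ?_⟩
    have h := hth (mem_ball_zero_iff.2 hz)
    rw [Set.mem_ofPred_eq] at h
    have hB : SS (fun n => (p*n+1 : ℂ) * ee q σ n) p z ≠ 0 := norm_pos_iff.1 ((norm_nonneg _).trans_lt h)
    rw [hsm.conv p hp2 z hB]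
    set A := SS (fun n => (p*n+1 : ℂ) * ((p*n+1 : ℂ) * ee q σ n)) p z
    set B := SS (fun n => (p*n+1 : ℂ) * ee q σ n) p z
    have e : A / B = 1 + (A - B)/B := by field_simp; ring
    have hn : ‖(A - B)/B‖ < 1 := by
      rw [norm_div, div_lt_one (norm_pos_iff.2 hB)]
      exact h
    rw [e, Complex.add_re, Complex.one_re]
    have := (abs_le.1 (Complex.abs_re_le_norm ((A-B)/B))).1
    linarith
  constructor
  · have := le_csSup ⟨x, hub⟩ hmem
    rw [radiusConvex]
    linarith
  · exact csSup_le ⟨_, hmem⟩ hub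

theorem stmt19 (q σ : ℝ) (hq0 : 0 < q) (hq1 : q < 1) (hσ : 0 < σ) :
    ((1 + q) / (9 * σ ^ 2) < radiusConvex 0 (gML0 σ q) ^ 2 ∧
      radiusConvex 0 (gML0 σ q) ^ 2 <
        9 * (1 + q) * (1 + q ^ 2) * (1 + q + q ^ 2) /
          (σ ^ 2 * (81 * q ^ 4 + 81 * q ^ 3 + 112 * q ^ 2 + 81 * q + 81))) ∧
    ((1 + q) / (4 * σ ^ 2) < radiusConvex 0 (hML0 σ q) ∧
      radiusConvex 0 (hML0 σ q) <
        2 * (1 + q) * (1 + q ^ 2) * (1 + q + q ^ 2) /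
          (σ ^ 2 * (8 * q ^ 4 + 8 * q ^ 3 + 7 * q ^ 2 + 8 * q + 8))) := by
  have hg : gML0 σ q = fun z => z * SS (ee q σ) 2 z := by
    funext z
    rw [gML0, qML, SS]
    congr 1
    refine tsum_congr fun n => ?_
    rw [ee, cc, add_zero, mul_div_assoc]
  have hh : hML0 σ q = fun z => z * SS (ee q σ) 1 z := by
    funext z
    rw [hML0, SS]
    congr 1
    refine tsum_congr fun n => ?_
    rw [ee, cc, one_mul, mul_div_assoc]
  have ht1 := tt_pos q hq0 hq1 1
  have ht2 := tt_pos q hq0 hq1 2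
  have hd2 := dd_two q hq0 hq1
  rw [hg, hh]
  constructor
  · obtain ⟨h1, h2⟩ := generic q σ hq0 hq1 hσ 2 (Or.inr rfl) (√((1+q)/(((2:ℕ)+1)^2*σ^2)))
      (√((1+q)/(((2:ℕ)+1)^2*σ^2) * (1 + 2 * tt q 2))) (Real.sqrt_nonneg _) (Real.sqrt_pos.2 (by positivity))
      (Real.sq_sqrt (by positivity)) (Real.sq_sqrt (by positivity))
    constructor
    · have := pow_lt_pow_left₀ h1 (Real.sqrt_nonneg _) two_ne_zero
      rw [Real.sq_sqrt (by positivity)] at this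
      have e9 : (((2:ℕ):ℝ)+1)^2 = 9 := by norm_num
      rwa [e9] at this
    · have h0 := (Real.sqrt_nonneg _).trans h1.le
      have := pow_le_pow_left₀ h0 h2 2
      rw [Real.sq_sqrt (by positivity)] at this
      refine this.trans_lt ?_
      rw [tt, hd2]
      norm_num
      rw [div_mul_eq_mul_div, div_lt_div_iff₀ (by positivity) (by positivity)]
      field_simp
      ring_nf
      nlinarith [pow_pos hq0 4]
  · obtain ⟨h1, h2⟩ := generic q σ hq0 hq1 hσ 1 (Or.inl rfl) ((1+q)/(((1:ℕ)+1)^2*σ^2))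
      ((1+q)/(((1:ℕ)+1)^2*σ^2) * (1 + 2 * tt q 1)) (by positivity) (by positivity)
      (pow_one _) (pow_one _)
    constructor
    · have e4 : (((1:ℕ):ℝ)+1)^2 = 4 := by norm_num
      rwa [e4] at h1
    · refine h2.trans_lt ?_
      rw [tt, hd2]
      norm_num
      rw [div_mul_eq_mul_div, div_lt_div_iff₀ (by positivity) (by positivity)]
      field_simp
      ring_nf
      nlinarith [pow_pos hq0 4]
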